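/- For every relational vocabulary ρ and all m, q ∈ ℕ there exist q*, r* ∈ ℕ such that for every ρ-structure B, every first-order formula ψ(z₁,…,z_m) over ρ of quantifier rank at most q, and all tuples w̄, w̄' ∈ U(B)^m: if ltp_{q*,r*}(B, w̄) = ltp_{q*,r*}(B, w̄'), then B ⊨ ψ(w̄) if and only if B ⊨ ψ(w̄'). -/

import Mathlib

open FirstOrder FirstOrder.Language

universe w

/-- The quantifier rank of a first-order (bounded) formula: the nesting depth of quantifiers. -/
def qRank {L : FirstOrder.Language} : ∀ {α : Type*} {n : ℕ}, L.BoundedFormula α n → ℕ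
  | _, _, .falsum => 0
  | _, _, .equal _ _ => 0
  | _, _, .rel _ _ => 0
  | _, _, .imp f g => max (qRank f) (qRank g)
  | _, _, .all f => qRank f + 1

/-- Adjacency in the Gaifman graph of a structure: two distinct elements are adjacent iff
they occur together in some tuple of some relation. -/
def gaifmanAdj (L : FirstOrder.Language) (M : Type w) [L.Structure M] (a b : M) : Prop :=
  a ≠ b ∧ ∃ (n : ℕ) (R : L.Relations n) (t : Fin n → M),
    Structure.RelMap R t ∧ (∃ i, t i = a) ∧ (∃ j, t j = b)

/-- `distLE L M r a b` means the distance between `a` and `b` in the Gaifman graph of `M`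
is at most `r`. -/
def distLE (L : FirstOrder.Language) (M : Type w) [L.Structure M] : ℕ → M → M → Prop
  | 0, a, b => a = b
  | r + 1, a, b => a = b ∨ ∃ c, gaifmanAdj L M a c ∧ distLE L M r c b

theorem distLE_self (L : FirstOrder.Language) (M : Type w) [L.Structure M] (r : ℕ) (a : M) :
    distLE L M r a a := by
  cases r with
  | zero => rfl
  | succ r => exact Or.inl rfl

/-- The `r`-neighbourhood of a tuple: all elements at Gaifman distance at most `r`
from some component of the tuple. -/
def nbhd (L : FirstOrder.Language) (M : Type w) [L.Structure M] (r : ℕ) {k : ℕ}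
    (u : Fin k → M) : Set M :=
  {b | ∃ i, distLE L M r (u i) b}

/-- `IsDistFormula L r d` says that the formula `d`, with two free variables, expresses
that the Gaifman distance between its two arguments is at most `r` (this is the property
of the formula `δ_{≤r}`). -/
def IsDistFormula.{v} (L : FirstOrder.Language) (r : ℕ) (d : L.Formula (Fin 2)) : Prop :=
  ∀ (M : Type v) [L.Structure M], ∀ a b : M, d.Realize ![a, b] ↔ distLE L M r a b

/-- The radius-`r` relativisation of a formula with free variables `x_0, …, x_{k-1}`,
relative to a formula `d = δ_{≤r}` expressing distance at most `r`: every (universal)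
quantifier `∀ y ψ` is replaced by `∀ y (⋁_i δ_{≤r}(x_i, y) → ψ)` (and consequently every
existential quantifier `∃ y ψ` by `∃ y (⋁_i δ_{≤r}(x_i, y) ∧ ψ)`). -/
def relativize {L : FirstOrder.Language} (d : L.Formula (Fin 2)) :
    ∀ {k n : ℕ}, L.BoundedFormula (Fin k) n → L.BoundedFormula (Fin k) n
  | _, _, .falsum => .falsum
  | _, _, .equal t₁ t₂ => .equal t₁ t₂
  | _, _, .rel R ts => .rel R ts
  | _, _, .imp f g => (relativize d f).imp (relativize d g)
  | k, n, .all f =>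
      ((((List.finRange k).map fun i =>
          BoundedFormula.relabel (![Sum.inl i, Sum.inr (Fin.last n)] : Fin 2 → (Fin k) ⊕ (Fin (n + 1))) d).foldr
            (· ⊔ ·) ⊥).imp (relativize d f)).all

/-- A formula is syntactically `r`-local (w.r.t. the distance formula `d = δ_{≤r}`) if it is
the radius-`r` relativisation of some formula. -/
def SynLocal {L : FirstOrder.Language} (d : L.Formula (Fin 2)) {k : ℕ}
    (φ : L.Formula (Fin k)) : Prop :=
  ∃ ψ : L.Formula (Fin k), φ = relativize d ψ

/-- The local `(q, r)`-type of a tuple `u` in `M`: the set of syntactically `r`-local formulas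
(w.r.t. the distance formula `d = δ_{≤r}`) of quantifier rank at most `q` satisfied by `u`. -/
def ltp {L : FirstOrder.Language} (d : L.Formula (Fin 2)) (q : ℕ) (M : Type w) [L.Structure M]
    {k : ℕ} (u : Fin k → M) : Set (L.Formula (Fin k)) :=
  {φ | SynLocal d φ ∧ qRank φ ≤ q ∧ φ.Realize u}

/-- The first-order `q`-type of a tuple `u` in `M`: the set of formulas of quantifier rank
at most `q` (with free variables among `x_0, …, x_{k-1}`) satisfied by `u`. -/
def ftp {L : FirstOrder.Language} (q : ℕ) (M : Type w) [L.Structure M]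
    {k : ℕ} (u : Fin k → M) : Set (L.Formula (Fin k)) :=
  {φ | qRank φ ≤ q ∧ φ.Realize u}

/-- The union of two disjoint structures (realized as a structure on the sum type):
a relation holds of a tuple iff the tuple lies entirely in one part and the relation
holds there. -/
def sumStructure (L : FirstOrder.Language) [L.IsRelational] (M N : Type w)
    [L.Structure M] [L.Structure N] : L.Structure (M ⊕ N) where
  funMap f _ := isEmptyElim f
  RelMap R t :=
    (∃ s, t = Sum.inl ∘ s ∧ Structure.RelMap R s) ∨
    (∃ s, t = Sum.inr ∘ s ∧ Structure.RelMap R s)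

/-- The substructure of `M` induced on a subset `S`. -/
def inducedStructure (L : FirstOrder.Language) [L.IsRelational] {M : Type w} [L.Structure M]
    (S : Set M) : L.Structure S where
  funMap f _ := isEmptyElim f
  RelMap R t := Structure.RelMap R fun i => (t i : M)

/-- A formula `φ(x_1, …, x_k)` is `r`-local if for every structure `M` and every tuple `u`,
`M ⊨ φ(u)` iff the substructure induced on the `r`-neighbourhood of `u` satisfies `φ(u)`. -/
def RLocal.{v} (L : FirstOrder.Language) [L.IsRelational] (r : ℕ) {k : ℕ}
    (φ : L.Formula (Fin k)) : Prop :=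
  ∀ (M : Type v) [L.Structure M] (u : Fin k → M),
    φ.Realize u ↔
      (letI := inducedStructure L (nbhd L M r u)
       Formula.Realize (M := nbhd L M r u) φ
         (fun i => ⟨u i, i, distLE_self L M r (u i)⟩))

/-!
By the Ehrenfeucht–Fraïssé theorem it suffices that Duplicator wins the `q`-round game on `B` from
the position pairing `w̄` with `w̄'`. Equal local types give her the game confined to
neighbourhoods of `w̄` and `w̄'`, with as many rounds and as large a radius as desired, and she
maintains such a local advantage, with shrinking parameters, while the pebbles move through all of
`B`.

If Spoiler picks an element near the current position, the local game supplies the answer. If he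
picks `a` far from it, Duplicator needs some `b` far from the position on the other side such that
she wins the local game between `a` and `b`; the new neighbourhoods are then separated from the
old ones, so the local games combine. If there were no such `b`, all elements locally equivalent
to `a` would lie near the position on the other side. Then any scattered family of such elements
near the position on `a`'s own side could be extended by `a`, lies as a whole near the other side,
and is copied back by the local game. Repeating this yields more scattered elements near the
position than it has pebbles, which is impossible.
-/

open scoped SetRel

section GaifmanDistance

variable (L : FirstOrder.Language) {M : Type*} [L.Structure M]

variable (M) in
/-- The Gaifman graph of a structure, bundled as a simple graph so that the graph metric of
Mathlib applies to it. -/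
def gaifmanGraph : SimpleGraph M where
  Adj := gaifmanAdj L M
  symm := ⟨fun _ _ ⟨hne, n, R, t, hR, ha, hb⟩ => ⟨hne.symm, n, R, t, hR, hb, ha⟩⟩
  loopless := ⟨fun _ h => h.1 rfl⟩

variable {L}

theorem distLE_iff_edist_le {r : ℕ} {a b : M} :
    distLE L M r a b ↔ (gaifmanGraph L M).edist a b ≤ r := by
  induction r generalizing a with
  | zero => simp [distLE]
  | succ r ih =>
    constructor
    · rintro (rfl | ⟨c, hac, hcb⟩)
      · simp
      · calc (gaifmanGraph L M).edist a b
          _ ≤ (gaifmanGraph L M).edist a c + (gaifmanGraph L M).edist c b :=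
            SimpleGraph.edist_triangle
          _ ≤ 1 + r := add_le_add (SimpleGraph.edist_eq_one_iff_adj.2 hac).le (ih.1 hcb)
          _ = (r + 1 : ℕ) := by rw [add_comm, Nat.cast_add_one]
    · intro h
      obtain ⟨walk, hwalk⟩ := SimpleGraph.exists_walk_of_edist_ne_top
        (ne_top_of_le_ne_top (ENat.natCast_ne_top _) h)
      cases walk with
      | nil => exact Or.inl rfl
      | cons hac tail =>
        rw [← hwalk, Nat.cast_le, SimpleGraph.Walk.length_cons, Nat.add_le_add_iff_right] at h
        exact Or.inr ⟨_, hac, ih.2 (tail.edist_le.trans (Nat.cast_le.2 h))⟩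

namespace distLE

variable {r s : ℕ} {a b c : M}

theorem mono (hrs : r ≤ s) (h : distLE L M r a b) : distLE L M s a b :=
  distLE_iff_edist_le.2 ((distLE_iff_edist_le.1 h).trans (Nat.cast_le.2 hrs))

theorem symm (h : distLE L M r a b) : distLE L M r b a := by
  rw [distLE_iff_edist_le, SimpleGraph.edist_comm]
  exact distLE_iff_edist_le.1 h

theorem trans (hab : distLE L M r a b) (hbc : distLE L M s b c) : distLE L M (r + s) a c := by
  rw [distLE_iff_edist_le, Nat.cast_add]
  exact SimpleGraph.edist_triangle.trans
    (add_le_add (distLE_iff_edist_le.1 hab) (distLE_iff_edist_le.1 hbc))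

end distLE

theorem distLE_one_of_relMap {n : ℕ} {R : L.Relations n} {t : Fin n → M}
    (hR : Structure.RelMap R t) (i j : Fin n) : distLE L M 1 (t i) (t j) := by
  by_cases h : t i = t j
  · exact Or.inl h
  · exact Or.inr ⟨t j, ⟨h, n, R, t, hR, ⟨i, rfl⟩, ⟨j, rfl⟩⟩, rfl⟩

section SetNbhd

variable (L) in
/-- The set of elements at Gaifman distance at most `r` from the set `A`: the neighbourhood `nbhd`
with the tuple replaced by a set of centres. -/
def setNbhd (r : ℕ) (A : Set M) : Set M := {b | ∃ a ∈ A, distLE L M r a b}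

variable {r s : ℕ} {A : Set M} {a b : M}

theorem nbhd_eq_setNbhd_range (r : ℕ) {k : ℕ} (u : Fin k → M) :
    nbhd L M r u = setNbhd L r (Set.range u) := by
  simp only [nbhd, setNbhd, Set.exists_range_iff]

theorem subset_setNbhd (r : ℕ) (A : Set M) : A ⊆ setNbhd L r A :=
  fun a ha => ⟨a, ha, distLE_self _ _ _ _⟩

theorem setNbhd_mono_left (h : r ≤ s) (A : Set M) : setNbhd L r A ⊆ setNbhd L s A :=
  fun _ ⟨a, ha, hb⟩ => ⟨a, ha, hb.mono h⟩

theorem setNbhd_mono_right (r : ℕ) {A' : Set M} (h : A ⊆ A') : setNbhd L r A ⊆ setNbhd L r A' :=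
  fun _ ⟨a, ha, hb⟩ => ⟨a, h ha, hb⟩

theorem setNbhd_insert (r : ℕ) (a : M) (A : Set M) :
    setNbhd L r (insert a A) = setNbhd L r {a} ∪ setNbhd L r A := by
  ext b
  simp [setNbhd]

theorem mem_setNbhd_of_distLE (ha : a ∈ setNbhd L r A) (hab : distLE L M s a b) :
    b ∈ setNbhd L (r + s) A := by
  obtain ⟨c, hc, hca⟩ := ha
  exact ⟨c, hc, hca.trans hab⟩

theorem setNbhd_singleton_subset (ha : a ∈ setNbhd L r A) :
    setNbhd L s {a} ⊆ setNbhd L (r + s) A := by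
  rintro b ⟨_, rfl, hb⟩
  exact mem_setNbhd_of_distLE ha hb

theorem setNbhd_insert_subset (ha : a ∈ setNbhd L r A) :
    setNbhd L s (insert a A) ⊆ setNbhd L (r + s) A := by
  rw [setNbhd_insert]
  exact Set.union_subset (setNbhd_singleton_subset ha) (setNbhd_mono_left (by lia) A)

end SetNbhd

variable (L) in
/-- No element of `A` is equal or adjacent to an element of `B` in the Gaifman graph, so that no
tuple of a relation meets both sets. -/
def GaifmanSeparated (A B : Set M) : Prop := ∀ a ∈ A, ∀ b ∈ B, ¬ distLE L M 1 a b

theorem gaifmanSeparated_setNbhd {r : ℕ} {a : M} {A : Set M}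
    (ha : a ∉ setNbhd L (2 * r + 1) A) :
    GaifmanSeparated L (setNbhd L r {a}) (setNbhd L r A) := by
  rintro x ⟨_, rfl, hax⟩ y hy hxy
  refine ha (setNbhd_mono_left ?_ A (mem_setNbhd_of_distLE hy (hxy.symm.trans hax.symm)))
  lia

variable (L) in
/-- A family of elements is `r`-scattered if its members are pairwise at Gaifman distance greater
than `r`. -/
def IsScattered {ι : Type*} (r : ℕ) (s : ι → M) : Prop :=
  Pairwise fun i j => ¬ distLE L M r (s i) (s j)

namespace IsScattered

theorem cons {n r : ℕ} {a : M} {s : Fin n → M} (hs : IsScattered L r s)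
    (ha : ∀ i, ¬ distLE L M r (s i) a) :
    IsScattered L r (Fin.cons a s : Fin (n + 1) → M) := by
  refine Fin.cases (Fin.cases ?_ fun j _ => ?_) fun i => Fin.cases (fun _ => ?_) fun j hij => ?_
  · exact fun h => absurd rfl h
  · exact fun h => ha j h.symm
  · exact ha i
  · exact hs fun h => hij (congrArg Fin.succ h)

theorem card_le_encard {ι : Type*} {c : ℕ} {s : ι → M} {A : Set M}
    (hs : IsScattered L (2 * c) s) (hsA : ∀ i, s i ∈ setNbhd L c A) :
    ENat.card ι ≤ A.encard := by
  choose centre hcentre hdist using hsA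
  have hinj : Function.Injective centre := by
    intro i j hij
    by_contra hne
    have hji : distLE L M c (centre i) (s j) := hij ▸ hdist j
    exact hs hne (two_mul c ▸ (hdist i).symm.trans hji)
  exact hinj.encard_range.trans (Set.encard_le_encard (Set.range_subset_iff.2 hcentre))

end IsScattered

end GaifmanDistance

section Positions

variable {α β γ : Type*}

theorem setRel_inv_insert (a : α) (b : β) (p : SetRel α β) :
    SetRel.inv (insert (a, b) p) = insert (b, a) p.inv := by
  ext ⟨b', a'⟩
  simp [and_comm]

theorem setRel_dom_insert (a : α) (b : β) (p : SetRel α β) :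
    SetRel.dom (insert (a, b) p) = insert a p.dom := by
  ext a'
  simp [exists_or]

theorem setRel_cod_insert (a : α) (b : β) (p : SetRel α β) :
    SetRel.cod (insert (a, b) p) = insert b p.cod := by
  ext b'
  simp [exists_or]

theorem setRel_dom_singleton (a : α) (b : β) : SetRel.dom {(a, b)} = {a} := by
  ext a'
  simp

theorem setRel_cod_singleton (a : α) (b : β) : SetRel.cod {(a, b)} = {b} := by
  ext b'
  simp

theorem encard_setRel_dom_le (p : SetRel α β) : p.dom.encard ≤ Set.encard p := by
  have hdom : p.dom = Prod.fst '' p := by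
    ext a
    simp
  exact hdom ▸ Set.encard_image_le _ _

theorem encard_setRel_inv (p : SetRel α β) : Set.encard p.inv = Set.encard p :=
  Set.encard_preimage_of_bijective Prod.swap_bijective p

/-- The position of a game in which the entries of two tuples with the same index are matched. -/
def tuplePairing {ι : Type*} (u : ι → α) (v : ι → β) : SetRel α β := Set.range fun i => (u i, v i)

theorem mem_tuplePairing {ι : Type*} (u : ι → α) (v : ι → β) (i : ι) :
    (u i, v i) ∈ tuplePairing u v :=
  ⟨i, rfl⟩

theorem dom_tuplePairing {ι : Type*} (u : ι → α) (v : ι → β) :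
    (tuplePairing u v).dom = Set.range u := by
  ext a
  simp [tuplePairing]

theorem cod_tuplePairing {ι : Type*} (u : ι → α) (v : ι → β) :
    (tuplePairing u v).cod = Set.range v := by
  ext b
  simp [tuplePairing]

theorem encard_tuplePairing_le {ι : Type*} (u : ι → α) (v : ι → β) :
    Set.encard (tuplePairing u v) ≤ ENat.card ι := by
  rw [tuplePairing, ← Set.image_univ, ← Set.encard_univ]
  exact Set.encard_image_le _ _

theorem tuplePairing_sumElim_snoc {ι : Type*} {n : ℕ} (u : ι → α) (v : ι → β) (xs : Fin n → α)
    (ys : Fin n → β) (x : α) (y : β) :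
    tuplePairing (Sum.elim u (Fin.snoc xs x : Fin (n + 1) → α))
        (Sum.elim v (Fin.snoc ys y : Fin (n + 1) → β)) =
      insert (x, y) (tuplePairing (Sum.elim u xs) (Sum.elim v ys)) := by
  ext ⟨a, b⟩
  simp [tuplePairing, Fin.exists_fin_succ', or_left_comm, or_comm, eq_comm]

end Positions

section Games

variable (L : FirstOrder.Language) {M M' M'' : Type*} [L.Structure M] [L.Structure M']
  [L.Structure M'']

/-- A relation between two structures is a partial isomorphism if it preserves and reflects
equality and all relations. Functions are ignored, since the vocabulary will be relational. -/
structure IsPartialIso (p : SetRel M M') : Prop where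
  eq_iff : ∀ ⦃a b a' b'⦄, (a, a') ∈ p → (b, b') ∈ p → (a = b ↔ a' = b')
  relMap_iff : ∀ ⦃n⦄ (R : L.Relations n) ⦃s : Fin n → M⦄ ⦃t : Fin n → M'⦄,
    (∀ i, (s i, t i) ∈ p) → (Structure.RelMap R s ↔ Structure.RelMap R t)

/-- Duplicator wins the `k`-round Ehrenfeucht–Fraïssé game from the position `p`, where both
players choose from `S` in the first structure and from `T` in the second. -/
def DuplicatorWins : ℕ → Set M → Set M' → SetRel M M' → Prop
  | 0, _, _, p => IsPartialIso L p
  | k + 1, S, T, p => IsPartialIso L p ∧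
      (∀ x ∈ S, ∃ y ∈ T, DuplicatorWins k S T (insert (x, y) p)) ∧
      (∀ y ∈ T, ∃ x ∈ S, DuplicatorWins k S T (insert (x, y) p))

/-- Duplicator wins the `k`-round Ehrenfeucht–Fraïssé game from the position `p` on the
`r`-neighbourhoods of `p`: the game-theoretic counterpart of equality of local types. -/
def DuplicatorWinsLocally (k r : ℕ) (p : SetRel M M') : Prop :=
  DuplicatorWins L k (setNbhd L r p.dom) (setNbhd L r p.cod) p

variable {L}

namespace IsPartialIso

variable {p q : SetRel M M'} {p' : SetRel M' M''}

theorem of_subset (hqp : q ⊆ p) (hp : IsPartialIso L p) : IsPartialIso L q where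
  eq_iff _ _ _ _ ha hb := hp.eq_iff (hqp ha) (hqp hb)
  relMap_iff _ R _ _ h := hp.relMap_iff R fun i => hqp (h i)

theorem inv (hp : IsPartialIso L p) : IsPartialIso L p.inv where
  eq_iff _ _ _ _ ha hb := (hp.eq_iff ha hb).symm
  relMap_iff _ R _ _ h := (hp.relMap_iff R h).symm

theorem of_subset_id {p : SetRel M M} (hp : p ⊆ .id) : IsPartialIso L p where
  eq_iff a b a' b' ha hb := by rw [show a = a' from hp ha, show b = b' from hp hb]
  relMap_iff _ R s t h := by rw [show s = t from funext fun i => hp (h i)]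

theorem comp (hp : IsPartialIso L p) (hp' : IsPartialIso L p') : IsPartialIso L (p ○ p') where
  eq_iff := fun _ _ _ _ ⟨_, ha, ha'⟩ ⟨_, hb, hb'⟩ => (hp.eq_iff ha hb).trans (hp'.eq_iff ha' hb')
  relMap_iff := by
    intro n R s t h
    choose m hsm hmt using h
    exact (hp.relMap_iff R hsm).trans (hp'.relMap_iff R hmt)

theorem relMap_of_union {S₁ S₂ : Set M} {T₁ T₂ : Set M'} {p₁ p₂ : SetRel M M'}
    (hp₁ : IsPartialIso L p₁) (hp₂ : IsPartialIso L p₂) (hS : GaifmanSeparated L S₁ S₂)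
    (hsub₁ : p₁ ⊆ S₁ ×ˢ T₁) (hsub₂ : p₂ ⊆ S₂ ×ˢ T₂) {n : ℕ} {R : L.Relations n} {s : Fin n → M}
    {t : Fin n → M'} (hst : ∀ i, (s i, t i) ∈ p₁ ∪ p₂) (hR : Structure.RelMap R s) :
    Structure.RelMap R t := by
  by_cases hall : ∀ i, (s i, t i) ∈ p₁
  · exact (hp₁.relMap_iff R hall).1 hR
  · obtain ⟨j, hj⟩ := not_forall.1 hall
    have hj₂ : (s j, t j) ∈ p₂ := (hst j).resolve_left hj
    refine (hp₂.relMap_iff R fun i => (hst i).resolve_left fun hi => ?_).1 hR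
    exact hS _ (hsub₁ hi).1 _ (hsub₂ hj₂).1 (distLE_one_of_relMap hR i j)

theorem union {S₁ S₂ : Set M} {T₁ T₂ : Set M'} {p₁ p₂ : SetRel M M'}
    (hp₁ : IsPartialIso L p₁) (hp₂ : IsPartialIso L p₂) (hS : GaifmanSeparated L S₁ S₂)
    (hT : GaifmanSeparated L T₁ T₂) (hsub₁ : p₁ ⊆ S₁ ×ˢ T₁) (hsub₂ : p₂ ⊆ S₂ ×ˢ T₂) :
    IsPartialIso L (p₁ ∪ p₂) where
  eq_iff := by
    have hne : ∀ ⦃a b a' b'⦄, (a, a') ∈ p₁ → (b, b') ∈ p₂ → a ≠ b ∧ a' ≠ b' := fun _ _ _ _ ha hb =>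
      ⟨fun h => hS _ (hsub₁ ha).1 _ (hsub₂ hb).1 (Or.inl h),
        fun h => hT _ (hsub₁ ha).2 _ (hsub₂ hb).2 (Or.inl h)⟩
    rintro a b a' b' (ha | ha) (hb | hb)
    · exact hp₁.eq_iff ha hb
    · exact iff_of_false (hne ha hb).1 (hne ha hb).2
    · exact iff_of_false (hne hb ha).1.symm (hne hb ha).2.symm
    · exact hp₂.eq_iff ha hb
  relMap_iff _ _ _ _ h :=
    ⟨relMap_of_union hp₁ hp₂ hS hsub₁ hsub₂ h,
      relMap_of_union hp₁.inv hp₂.inv hT (fun _ h => (hsub₁ h).symm) (fun _ h => (hsub₂ h).symm) h⟩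

end IsPartialIso

namespace DuplicatorWins

variable {S : Set M} {T : Set M'} {U : Set M''} {p q : SetRel M M'} {k l : ℕ}

theorem isPartialIso (h : DuplicatorWins L k S T p) : IsPartialIso L p := by
  cases k with
  | zero => exact h
  | succ k => exact h.1

theorem of_subset (hqp : q ⊆ p) (h : DuplicatorWins L k S T p) : DuplicatorWins L k S T q := by
  induction k generalizing p q with
  | zero => exact IsPartialIso.of_subset hqp h
  | succ k ih =>
    obtain ⟨hiso, hforth, hback⟩ := h
    refine ⟨hiso.of_subset hqp, fun x hx => ?_, fun y hy => ?_⟩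
    · obtain ⟨y, hy, hxy⟩ := hforth x hx
      exact ⟨y, hy, ih (Set.insert_subset_insert hqp) hxy⟩
    · obtain ⟨x, hx, hxy⟩ := hback y hy
      exact ⟨x, hx, ih (Set.insert_subset_insert hqp) hxy⟩

theorem of_succ (h : DuplicatorWins L (k + 1) S T p) : DuplicatorWins L k S T p := by
  induction k generalizing p with
  | zero => exact h.1
  | succ k ih =>
    obtain ⟨hiso, hforth, hback⟩ := h
    exact ⟨hiso, fun x hx => (hforth x hx).imp fun _ => And.imp_right ih,
      fun y hy => (hback y hy).imp fun _ => And.imp_right ih⟩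

theorem of_le (hlk : l ≤ k) (h : DuplicatorWins L k S T p) : DuplicatorWins L l S T p := by
  induction hlk with
  | refl => exact h
  | step _ ih => exact ih h.of_succ

theorem inv (h : DuplicatorWins L k S T p) : DuplicatorWins L k T S p.inv := by
  induction k generalizing p with
  | zero => exact IsPartialIso.inv h
  | succ k ih =>
    obtain ⟨hiso, hforth, hback⟩ := h
    refine ⟨hiso.inv, fun y hy => ?_, fun x hx => ?_⟩
    · obtain ⟨x, hx, hxy⟩ := hback y hy
      exact ⟨x, hx, setRel_inv_insert x y p ▸ ih hxy⟩
    · obtain ⟨y, hy, hxy⟩ := hforth x hx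
      exact ⟨y, hy, setRel_inv_insert x y p ▸ ih hxy⟩

theorem of_subset_id {p : SetRel M M} (hp : p ⊆ .id) : DuplicatorWins L k S S p := by
  induction k generalizing p with
  | zero => exact IsPartialIso.of_subset_id hp
  | succ k ih =>
    have copy : ∀ x ∈ S, DuplicatorWins L k S S (insert (x, x) p) := fun x _ =>
      ih (Set.insert_subset rfl hp)
    exact ⟨.of_subset_id hp, fun x hx => ⟨x, hx, copy x hx⟩, fun x hx => ⟨x, hx, copy x hx⟩⟩

theorem comp {p' : SetRel M' M''} (h : DuplicatorWins L k S T p)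
    (h' : DuplicatorWins L k T U p') : DuplicatorWins L k S U (p ○ p') := by
  induction k generalizing p p' with
  | zero => exact IsPartialIso.comp h h'
  | succ k ih =>
    obtain ⟨hiso, hforth, hback⟩ := h
    obtain ⟨hiso', hforth', hback'⟩ := h'
    have insert_subset : ∀ x y z, insert (x, z) (p ○ p') ⊆ insert (x, y) p ○ insert (y, z) p' :=
      fun x y z => Set.insert_subset ⟨y, Or.inl rfl, Or.inl rfl⟩
        (SetRel.comp_subset_comp (Set.subset_insert _ _) (Set.subset_insert _ _))
    refine ⟨hiso.comp hiso', fun x hx => ?_, fun z hz => ?_⟩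
    · obtain ⟨y, hy, hxy⟩ := hforth x hx
      obtain ⟨z, hz, hyz⟩ := hforth' y hy
      exact ⟨z, hz, (ih hxy hyz).of_subset (insert_subset x y z)⟩
    · obtain ⟨y, hy, hyz⟩ := hback' z hz
      obtain ⟨x, hx, hxy⟩ := hback y hy
      exact ⟨x, hx, (ih hxy hyz).of_subset (insert_subset x y z)⟩

theorem union {S₁ S₂ : Set M} {T₁ T₂ : Set M'} {p₁ p₂ : SetRel M M'}
    (h₁ : DuplicatorWins L k S₁ T₁ p₁) (h₂ : DuplicatorWins L k S₂ T₂ p₂)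
    (hS : GaifmanSeparated L S₁ S₂) (hT : GaifmanSeparated L T₁ T₂) (hp₁ : p₁ ⊆ S₁ ×ˢ T₁)
    (hp₂ : p₂ ⊆ S₂ ×ˢ T₂) : DuplicatorWins L k (S₁ ∪ S₂) (T₁ ∪ T₂) (p₁ ∪ p₂) := by
  induction k generalizing p₁ p₂ with
  | zero => exact IsPartialIso.union h₁ h₂ hS hT hp₁ hp₂
  | succ k ih =>
    have left : ∀ x ∈ S₁, ∀ y ∈ T₁, DuplicatorWins L k S₁ T₁ (insert (x, y) p₁) →
        DuplicatorWins L k (S₁ ∪ S₂) (T₁ ∪ T₂) (insert (x, y) (p₁ ∪ p₂)) := fun x hx y hy hxy => by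
      rw [← Set.insert_union]
      exact ih hxy h₂.of_succ (Set.insert_subset ⟨hx, hy⟩ hp₁) hp₂
    have right : ∀ x ∈ S₂, ∀ y ∈ T₂, DuplicatorWins L k S₂ T₂ (insert (x, y) p₂) →
        DuplicatorWins L k (S₁ ∪ S₂) (T₁ ∪ T₂) (insert (x, y) (p₁ ∪ p₂)) := fun x hx y hy hxy => by
      rw [← Set.union_insert]
      exact ih h₁.of_succ hxy hp₁ (Set.insert_subset ⟨hx, hy⟩ hp₂)
    refine ⟨h₁.isPartialIso.union h₂.isPartialIso hS hT hp₁ hp₂, ?_, ?_⟩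
    · rintro x (hx | hx)
      · obtain ⟨y, hy, hxy⟩ := h₁.2.1 x hx
        exact ⟨y, Or.inl hy, left x hx y hy hxy⟩
      · obtain ⟨y, hy, hxy⟩ := h₂.2.1 x hx
        exact ⟨y, Or.inr hy, right x hx y hy hxy⟩
    · rintro y (hy | hy)
      · obtain ⟨x, hx, hxy⟩ := h₁.2.2 y hy
        exact ⟨x, Or.inl hx, left x hx y hy hxy⟩
      · obtain ⟨x, hx, hxy⟩ := h₂.2.2 y hy
        exact ⟨x, Or.inr hx, right x hx y hy hxy⟩

theorem exists_answers {n : ℕ} (h : DuplicatorWins L (n + k) S T p) {s : Fin n → M}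
    (hs : ∀ i, s i ∈ S) : ∃ t : Fin n → M', DuplicatorWins L k S T (p ∪ tuplePairing s t) := by
  induction n generalizing p with
  | zero =>
    rw [Nat.zero_add] at h
    exact ⟨Fin.elim0, h.of_subset (Set.union_subset subset_rfl (by rintro _ ⟨i, _⟩; exact i.elim0))⟩
  | succ n ih =>
    rw [Nat.add_right_comm] at h
    obtain ⟨y, -, hy⟩ := h.2.1 (s 0) (hs 0)
    obtain ⟨t, ht⟩ := ih hy fun i => hs i.succ
    refine ⟨Fin.cons y t, ht.of_subset (Set.union_subset ?_ ?_)⟩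
    · exact (Set.subset_insert _ _).trans Set.subset_union_left
    · rintro _ ⟨i, rfl⟩
      exact Fin.cases (Or.inl (Or.inl rfl)) (fun i => Or.inr (mem_tuplePairing _ _ i)) i

section BoundedArity

variable {N r : ℕ} {x y : M} {x' y' : M'}

theorem gaifmanAdj_of_mem (hN : ∀ n, L.Relations n → n ≤ N) (h : DuplicatorWins L N S T p)
    (hx : (x, x') ∈ p) (hy : (y, y') ∈ p) (hS : setNbhd L 1 {x} ⊆ S) (hadj : gaifmanAdj L M x y) :
    gaifmanAdj L M' x' y' := by
  obtain ⟨hne, n, R, s, hR, ⟨i, rfl⟩, ⟨j, rfl⟩⟩ := hadj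
  have hs : ∀ l, s l ∈ S := fun l => hS ⟨s i, rfl, distLE_one_of_relMap hR i l⟩
  obtain ⟨t, ht⟩ := exists_answers (k := 0) (h.of_le (hN n R)) hs
  have hiso := ht.isPartialIso
  have hst : ∀ l, (s l, t l) ∈ p ∪ tuplePairing s t := fun l => Or.inr (mem_tuplePairing s t l)
  exact ⟨fun h' => hne ((h.isPartialIso.eq_iff hx hy).2 h'), n, R, t, (hiso.relMap_iff R hst).1 hR,
    ⟨i, (hiso.eq_iff (hst i) (Or.inl hx)).1 rfl⟩, ⟨j, (hiso.eq_iff (hst j) (Or.inl hy)).1 rfl⟩⟩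

theorem distLE_of_mem (hN : ∀ n, L.Relations n → n ≤ N) (h : DuplicatorWins L (r + N) S T p)
    (hx : (x, x') ∈ p) (hy : (y, y') ∈ p) (hS : setNbhd L r {x} ⊆ S) (hd : distLE L M r x y) :
    distLE L M' r x' y' := by
  induction r generalizing p x x' with
  | zero => exact (h.isPartialIso.eq_iff hx hy).1 hd
  | succ r ih =>
    obtain rfl | ⟨z, hxz, hzy⟩ := hd
    · exact Or.inl ((h.isPartialIso.eq_iff hx hy).1 rfl)
    · have hz : z ∈ setNbhd L 1 {x} := ⟨x, rfl, Or.inr ⟨z, hxz, rfl⟩⟩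
      rw [Nat.add_right_comm] at h
      obtain ⟨z', -, hz'⟩ := h.2.1 z (hS (setNbhd_mono_left (by lia) _ hz))
      refine Or.inr ⟨z', ?_, ih hz' (Or.inl rfl) (Or.inr hy) ?_ hzy⟩
      · exact gaifmanAdj_of_mem hN (hz'.of_le (by lia)) (Or.inr hx) (Or.inl rfl)
          ((setNbhd_mono_left (by lia) _).trans hS) hxz
      · rw [Nat.add_comm r] at hS
        exact (setNbhd_singleton_subset hz).trans hS

theorem mem_setNbhd_cod (hN : ∀ n, L.Relations n → n ≤ N) (h : DuplicatorWins L (r + N) S T p)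
    (hqp : q ⊆ p) (hx : (x, x') ∈ p) (hS : setNbhd L r q.dom ⊆ S) (hxq : x ∈ setNbhd L r q.dom) :
    x' ∈ setNbhd L r q.cod := by
  obtain ⟨c, hcdom, hd⟩ := hxq
  have hcS : setNbhd L r {c} ⊆ S :=
    (setNbhd_mono_right r (Set.singleton_subset_iff.2 hcdom)).trans hS
  obtain ⟨c', hc⟩ := hcdom
  exact ⟨c', ⟨c, hc⟩, distLE_of_mem hN h (hqp hc) hx hcS hd⟩

theorem restrict (hN : ∀ n, L.Relations n → n ≤ N) (h : DuplicatorWins L (k + (r + N)) S T p)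
    (hqp : q ⊆ p) (hS : setNbhd L r q.dom ⊆ S) (hT : setNbhd L r q.cod ⊆ T) :
    DuplicatorWins L k (setNbhd L r q.dom) (setNbhd L r q.cod) p := by
  induction k generalizing p with
  | zero => exact h.isPartialIso
  | succ k ih =>
    rw [Nat.add_right_comm] at h
    have hqp' : ∀ z, q ⊆ insert z p := fun z => hqp.trans (Set.subset_insert z p)
    refine ⟨h.isPartialIso, fun x hx => ?_, fun y hy => ?_⟩
    · obtain ⟨y, -, hxy⟩ := h.2.1 x (hS hx)
      have hy := mem_setNbhd_cod hN (hxy.of_le (Nat.le_add_left _ k)) (hqp' _) (Or.inl rfl) hS hx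
      exact ⟨y, hy, ih hxy (hqp' _)⟩
    · obtain ⟨x, -, hxy⟩ := h.2.2 y (hT hy)
      have hx := mem_setNbhd_cod hN (hxy.inv.of_le (Nat.le_add_left _ k))
        (SetRel.inv_mono (hqp' _)) (Or.inl rfl) hT hy
      exact ⟨x, hx, ih hxy (hqp' _)⟩

theorem locally (hN : ∀ n, L.Relations n → n ≤ N) (h : DuplicatorWins L (k + (r + N)) S T p)
    (hqp : q ⊆ p) (hS : setNbhd L r q.dom ⊆ S) (hT : setNbhd L r q.cod ⊆ T) :
    DuplicatorWinsLocally L k r q :=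
  (h.restrict hN hqp hS hT).of_subset hqp

end BoundedArity

end DuplicatorWins

namespace DuplicatorWinsLocally

variable {p : SetRel M M'} {k r c ρ R N m n : ℕ}

theorem of_le {l : ℕ} (hlk : l ≤ k) (h : DuplicatorWinsLocally L k r p) :
    DuplicatorWinsLocally L l r p :=
  DuplicatorWins.of_le hlk h

theorem inv (h : DuplicatorWinsLocally L k r p) : DuplicatorWinsLocally L k r p.inv :=
  DuplicatorWins.inv h

theorem refl_singleton (a : M) : DuplicatorWinsLocally L k r {(a, a)} := by
  rw [DuplicatorWinsLocally, setRel_dom_singleton, setRel_cod_singleton]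
  exact .of_subset_id (Set.singleton_subset_iff.2 rfl)

theorem trans_singleton {a : M} {b : M'} {e : M''} (hab : DuplicatorWinsLocally L k r {(a, b)})
    (hbe : DuplicatorWinsLocally L k r {(b, e)}) : DuplicatorWinsLocally L k r {(a, e)} := by
  simp only [DuplicatorWinsLocally, setRel_dom_singleton, setRel_cod_singleton] at hab hbe ⊢
  have hae : (a, e) ∈ SetRel.comp {(a, b)} {(b, e)} := ⟨b, rfl, rfl⟩
  exact (hab.comp hbe).of_subset (Set.singleton_subset_iff.2 hae)

theorem mono {s : ℕ} (hN : ∀ n, L.Relations n → n ≤ N) (hrs : r ≤ s)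
    (h : DuplicatorWinsLocally L (k + (r + N)) s p) : DuplicatorWinsLocally L k r p :=
  h.locally hN subset_rfl (setNbhd_mono_left hrs _) (setNbhd_mono_left hrs _)

theorem exists_scattered (hN : ∀ n, L.Relations n → n ≤ N)
    (h : DuplicatorWinsLocally L (n + (k + (ρ + N))) R p) (hr : r ≤ ρ) (hc : c ≤ ρ)
    (hR : c + ρ ≤ R) {s : Fin n → M} (hs : ∀ i, s i ∈ setNbhd L c p.dom)
    (hsep : IsScattered L ρ s) :
    ∃ t : Fin n → M', (∀ i, t i ∈ setNbhd L c p.cod) ∧ IsScattered L ρ t ∧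
      ∀ i, DuplicatorWinsLocally L k r {(s i, t i)} := by
  obtain ⟨t, ht⟩ := DuplicatorWins.exists_answers h fun i => setNbhd_mono_left (by lia) _ (hs i)
  have hst : ∀ i, (s i, t i) ∈ p ∪ tuplePairing s t := fun i => Or.inr (mem_tuplePairing s t i)
  have htc : ∀ i, t i ∈ setNbhd L c p.cod := fun i =>
    DuplicatorWins.mem_setNbhd_cod hN (ht.of_le (by lia)) Set.subset_union_left (hst i)
      (setNbhd_mono_left (by lia) _) (hs i)
  refine ⟨t, htc, fun i j hij hd => hsep hij ?_, fun i => ?_⟩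
  · exact (ht.inv.of_le (Nat.le_add_left _ k)).distLE_of_mem hN (hst i) (hst j)
      ((setNbhd_singleton_subset (htc i)).trans (setNbhd_mono_left hR _)) hd
  · refine (ht.of_le (l := k + (r + N)) (by lia)).locally hN
      (Set.singleton_subset_iff.2 (hst i)) ?_ ?_
    · rw [setRel_dom_singleton]
      exact (setNbhd_singleton_subset (hs i)).trans (setNbhd_mono_left (by lia) _)
    · rw [setRel_cod_singleton]
      exact (setNbhd_singleton_subset (htc i)).trans (setNbhd_mono_left (by lia) _)

theorem exists_far {p : SetRel M M} (hN : ∀ n, L.Relations n → n ≤ N) (hp : Set.encard p ≤ m)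
    (hr : r ≤ 2 * c) (hR : 3 * c ≤ R) (h : DuplicatorWinsLocally L (m + 1 + (k + (2 * c + N))) R p)
    {a : M} (ha : a ∉ setNbhd L (3 * c) p.dom) :
    ∃ b ∉ setNbhd L c p.cod, DuplicatorWinsLocally L k r {(a, b)} := by
  by_contra! hnear
  have hcod : ∀ b, DuplicatorWinsLocally L k r {(a, b)} → b ∈ setNbhd L c p.cod := fun b hab =>
    by_contra fun hb => hnear b hb hab
  have hscattered : ∀ j ≤ m + 1, ∃ s : Fin j → M, (∀ i, s i ∈ setNbhd L c p.dom) ∧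
      IsScattered L (2 * c) s ∧ ∀ i, DuplicatorWinsLocally L k r {(a, s i)} := by
    intro j hj
    induction j with
    | zero => exact ⟨Fin.elim0, fun i => i.elim0, fun i => i.elim0, fun i => i.elim0⟩
    | succ j ih =>
      obtain ⟨s, hs, hsep, hsa⟩ := ih (by lia)
      have hsep' : IsScattered L (2 * c) (Fin.cons a s : Fin (j + 1) → M) :=
        hsep.cons fun i hd =>
          ha (setNbhd_mono_left (by lia) _ (mem_setNbhd_of_distLE (hs i) hd))
      have hsa' : ∀ i, DuplicatorWinsLocally L k r {(a, (Fin.cons a s : Fin (j + 1) → M) i)} :=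
        Fin.cases (refl_singleton a) hsa
      obtain ⟨t, ht, htsep, hst⟩ := exists_scattered (k := k) hN (h.inv.of_le (by lia)) hr
        (by lia) (by lia) (fun i => hcod _ (hsa' i)) hsep'
      exact ⟨t, ht, htsep, fun i => (hsa' i).trans_singleton (hst i)⟩
  obtain ⟨s, hs, hsep, -⟩ := hscattered (m + 1) le_rfl
  have hcard : ((m + 1 : ℕ) : ℕ∞) ≤ m := by
    simpa using (hsep.card_le_encard hs).trans ((encard_setRel_dom_le p).trans hp)
  exact absurd (Nat.cast_le.1 hcard) (by lia)

theorem exists_near (hN : ∀ n, L.Relations n → n ≤ N) (hrc : r ≤ c)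
    (h : DuplicatorWinsLocally L (k + (c + N) + 1) (c + r) p) {a : M}
    (ha : a ∈ setNbhd L c p.dom) : ∃ b, DuplicatorWinsLocally L k r (insert (a, b) p) := by
  obtain ⟨b, -, hab⟩ := h.2.1 a (setNbhd_mono_left (by lia) _ ha)
  have hb : b ∈ setNbhd L c p.cod :=
    DuplicatorWins.mem_setNbhd_cod hN (hab.of_le (Nat.le_add_left _ k)) (Set.subset_insert _ p)
      (Or.inl rfl) (setNbhd_mono_left (by lia) _) ha
  refine ⟨b, (hab.of_le (l := k + (r + N)) (by lia)).locally hN subset_rfl ?_ ?_⟩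
  · rw [setRel_dom_insert]
    exact setNbhd_insert_subset ha
  · rw [setRel_cod_insert]
    exact setNbhd_insert_subset hb

theorem insert_of_far {a : M} {b : M'} (ha : a ∉ setNbhd L (2 * r + 1) p.dom)
    (hb : b ∉ setNbhd L (2 * r + 1) p.cod) (hab : DuplicatorWinsLocally L k r {(a, b)})
    (h : DuplicatorWinsLocally L k r p) : DuplicatorWinsLocally L k r (insert (a, b) p) := by
  rw [DuplicatorWinsLocally, setRel_dom_singleton, setRel_cod_singleton] at hab
  rw [DuplicatorWinsLocally, setRel_dom_insert, setRel_cod_insert, setNbhd_insert, setNbhd_insert,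
    Set.insert_eq]
  refine DuplicatorWins.union hab h (gaifmanSeparated_setNbhd ha) (gaifmanSeparated_setNbhd hb)
    ?_ fun ⟨x, y⟩ hxy => ⟨subset_setNbhd r _ ⟨y, hxy⟩, subset_setNbhd r _ ⟨x, hxy⟩⟩
  exact Set.singleton_subset_iff.2 ⟨subset_setNbhd r _ rfl, subset_setNbhd r _ rfl⟩

theorem exists_forth {p : SetRel M M} (hN : ∀ n, L.Relations n → n ≤ N) (hp : Set.encard p ≤ m)
    (hrc : 2 * r + 1 ≤ c)
    (h : DuplicatorWinsLocally L (m + 1 + (k + (3 * c + N))) (3 * c + r) p) (a : M) :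
    ∃ b, DuplicatorWinsLocally L k r (insert (a, b) p) := by
  by_cases ha : a ∈ setNbhd L (3 * c) p.dom
  · exact exists_near hN (by lia) (h.of_le (by lia)) ha
  · obtain ⟨b, hb, hab⟩ := exists_far (k := k) (r := r) hN hp (by lia) (by lia)
      (h.of_le (by lia)) ha
    exact ⟨b, insert_of_far (fun ha' => ha (setNbhd_mono_left (by lia) _ ha'))
      (fun hb' => hb (setNbhd_mono_left hrc _ hb')) hab
      ((h.of_le (l := k + (r + N)) (by lia)).mono hN (by lia))⟩

end DuplicatorWinsLocally

theorem exists_duplicatorWins_univ {N : ℕ} (hN : ∀ n, L.Relations n → n ≤ N) (k m : ℕ) :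
    ∃ r K : ℕ, ∀ (M : Type w) [L.Structure M] (p : SetRel M M), Set.encard p ≤ m →
      DuplicatorWinsLocally L K r p → DuplicatorWins L k Set.univ Set.univ p := by
  induction k generalizing m with
  | zero => exact ⟨0, 0, fun M _ p _ h => h⟩
  | succ k ih =>
    obtain ⟨r, K, hrK⟩ := ih (m + 1)
    refine ⟨3 * (2 * r + 1) + r, m + 1 + (K + (3 * (2 * r + 1) + N)), fun M _ p hp h => ?_⟩
    have hinsert : ∀ a b, DuplicatorWinsLocally L K r (insert (a, b) p) →
        DuplicatorWins L k Set.univ Set.univ (insert (a, b) p) := fun a b =>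
      hrK M _ ((Set.encard_insert_le _ _).trans (add_le_add_left hp 1))
    refine ⟨h.isPartialIso, fun a _ => ?_, fun b _ => ?_⟩
    · obtain ⟨b, hab⟩ := h.exists_forth hN hp le_rfl a
      exact ⟨b, trivial, hinsert a b hab⟩
    · obtain ⟨a, hba⟩ := h.inv.exists_forth hN ((encard_setRel_inv p).trans_le hp) le_rfl b
      rw [← setRel_inv_insert] at hba
      exact ⟨a, trivial, hinsert a b hba.inv⟩

end Games

section Formulas

variable {L : FirstOrder.Language}

theorem realize_mem_tuplePairing [L.IsRelational] {M M' β : Type*} [L.Structure M]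
    [L.Structure M'] (t : L.Term β) (v : β → M) (v' : β → M') :
    (t.realize v, t.realize v') ∈ tuplePairing v v' := by
  cases t with
  | var i => exact mem_tuplePairing v v' i
  | func f _ => exact isEmptyElim f

theorem DuplicatorWins.realize_iff [L.IsRelational] {M M' α : Type*} [L.Structure M]
    [L.Structure M'] {n k : ℕ} {ψ : L.BoundedFormula α n} (hψ : qRank ψ ≤ k) {v : α → M}
    {v' : α → M'} {xs : Fin n → M} {xs' : Fin n → M'}
    (h : DuplicatorWins L k Set.univ Set.univ (tuplePairing (Sum.elim v xs) (Sum.elim v' xs'))) :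
    ψ.Realize v xs ↔ ψ.Realize v' xs' := by
  induction ψ generalizing k with
  | falsum => exact Iff.rfl
  | equal t₁ t₂ =>
    exact h.isPartialIso.eq_iff (realize_mem_tuplePairing t₁ _ _) (realize_mem_tuplePairing t₂ _ _)
  | rel R ts => exact h.isPartialIso.relMap_iff R fun i => realize_mem_tuplePairing (ts i) _ _
  | imp f g ihf ihg =>
    rw [qRank, max_le_iff] at hψ
    exact imp_congr (ihf hψ.1 h) (ihg hψ.2 h)
  | all f ih =>
    obtain _ | k := k
    · simp [qRank] at hψ
    rw [qRank, Nat.add_le_add_iff_right] at hψ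
    have hsnoc : ∀ x y, DuplicatorWins L k Set.univ Set.univ
          (insert (x, y) (tuplePairing (Sum.elim v xs) (Sum.elim v' xs'))) →
        (f.Realize v (Fin.snoc xs x) ↔ f.Realize v' (Fin.snoc xs' y)) := fun x y hxy =>
      ih hψ (tuplePairing_sumElim_snoc v v' xs xs' x y ▸ hxy)
    rw [BoundedFormula.realize_all, BoundedFormula.realize_all]
    constructor
    · intro hf y
      obtain ⟨x, -, hxy⟩ := h.2.2 y trivial
      exact (hsnoc x y hxy).1 (hf x)
    · intro hf x
      obtain ⟨y, -, hxy⟩ := h.2.1 x trivial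
      exact (hsnoc x y hxy).2 (hf y)

section Relativization

variable {d : L.Formula (Fin 2)} {r m n : ℕ}

theorem realize_relativize_all (hd : IsDistFormula.{w} L r d) {M : Type w} [L.Structure M]
    (f : L.BoundedFormula (Fin m) (n + 1)) (u : Fin m → M) (xs : Fin n → M) :
    (relativize d f.all).Realize u xs ↔
      ∀ b ∈ nbhd L M r u, (relativize d f).Realize u (Fin.snoc xs b) := by
  rw [relativize, BoundedFormula.realize_all]
  refine forall_congr' fun b => ?_
  rw [BoundedFormula.realize_imp, BoundedFormula.realize_foldr_sup]
  refine imp_congr ?_ Iff.rfl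
  simp only [List.mem_map, List.mem_finRange, true_and, exists_exists_eq_and, nbhd,
    Set.mem_ofPred_eq]
  refine exists_congr fun i => ?_
  rw [← hd M, BoundedFormula.realize_relabel, Formula.Realize]
  refine iff_of_eq (congrArg₂ _ (funext fun j => ?_) (Subsingleton.elim _ _))
  fin_cases j
  · rfl
  · exact Fin.snoc_last (α := fun _ => M) b xs

theorem relativize_bot : relativize d (⊥ : L.BoundedFormula (Fin m) n) = ⊥ := by
  change relativize d .falsum = _
  rw [relativize]
  rfl

theorem relativize_not (f : L.BoundedFormula (Fin m) n) :
    relativize d f.not = (relativize d f).not := by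
  rw [BoundedFormula.not, relativize, relativize_bot]
  rfl

theorem relativize_inf (f g : L.BoundedFormula (Fin m) n) :
    relativize d (f ⊓ g) = relativize d f ⊓ relativize d g := by
  change relativize d (f.imp g.not).not = _
  rw [relativize_not, relativize, relativize_not]
  rfl

theorem realize_relativize_ex (hd : IsDistFormula.{w} L r d) {M : Type w} [L.Structure M]
    (f : L.BoundedFormula (Fin m) (n + 1)) (u : Fin m → M) (xs : Fin n → M) :
    (relativize d f.ex).Realize u xs ↔
      ∃ b ∈ nbhd L M r u, (relativize d f).Realize u (Fin.snoc xs b) := by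
  rw [BoundedFormula.ex, relativize_not, BoundedFormula.realize_not, realize_relativize_all hd]
  simp only [relativize_not, BoundedFormula.realize_not]
  push Not
  rfl

/-- Two assignments, possibly in different structures, satisfy the same relativisations of
formulas from `F`. -/
def AgreeOnRelativized (d : L.Formula (Fin 2)) (F : Set (L.BoundedFormula (Fin m) n))
    {M M' : Type*} [L.Structure M] [L.Structure M'] (u : Fin m → M) (xs : Fin n → M)
    (u' : Fin m → M') (xs' : Fin n → M') : Prop :=
  ∀ φ ∈ F, (relativize d φ).Realize u xs ↔ (relativize d φ).Realize u' xs'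

namespace AgreeOnRelativized

variable {F F' : Set (L.BoundedFormula (Fin m) n)} {M M' : Type*} [L.Structure M]
  [L.Structure M'] {u : Fin m → M} {xs : Fin n → M} {u' : Fin m → M'} {xs' : Fin n → M'}

theorem symm (h : AgreeOnRelativized d F u xs u' xs') : AgreeOnRelativized d F u' xs' u xs :=
  fun φ hφ => (h φ hφ).symm

theorem of_subset (hF : F' ⊆ F) (h : AgreeOnRelativized d F u xs u' xs') :
    AgreeOnRelativized d F' u xs u' xs' :=
  fun φ hφ => h φ (hF hφ)

end AgreeOnRelativized

theorem agreeOnRelativized_of_ltp_eq {M M' : Type*} [L.Structure M] [L.Structure M']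
    {F : Set (L.Formula (Fin m))} {q : ℕ} {u : Fin m → M} {u' : Fin m → M'}
    (hF : ∀ φ ∈ F, qRank (relativize d φ) ≤ q) (h : ltp d q M u = ltp d q M' u') :
    AgreeOnRelativized d F u default u' default := by
  intro φ hφ
  have hlocal : SynLocal d (relativize d φ) := ⟨φ, rfl⟩
  have hmem : relativize d φ ∈ ltp d q M u ↔ relativize d φ ∈ ltp d q M' u' := by rw [h]
  exact ⟨fun hu => (hmem.1 ⟨hlocal, hF φ hφ, hu⟩).2.2,
    fun hu' => (hmem.2 ⟨hlocal, hF φ hφ, hu'⟩).2.2⟩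

theorem exists_realize_relativize_iff_type (d : L.Formula (Fin 2))
    {F : Set (L.BoundedFormula (Fin m) n)} (hF : F.Finite)
    (G : Set (L.BoundedFormula (Fin m) n)) :
    ∃ χ : L.BoundedFormula (Fin m) n, ∀ (M : Type w) [L.Structure M] (u : Fin m → M)
      (xs : Fin n → M), (relativize d χ).Realize u xs ↔
        ∀ φ ∈ F, ((relativize d φ).Realize u xs ↔ φ ∈ G) := by
  induction F, hF using Set.Finite.induction_on with
  | empty => exact ⟨.not ⊥, fun M _ u xs => by simp [relativize_not, relativize_bot]⟩
  | @insert φ F _ _ ih =>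
    obtain ⟨χ, hχ⟩ := ih
    by_cases hφ : φ ∈ G
    · refine ⟨φ ⊓ χ, fun M _ u xs => ?_⟩
      rw [relativize_inf, BoundedFormula.realize_inf, hχ, Set.forall_mem_insert, iff_true_right hφ]
    · refine ⟨φ.not ⊓ χ, fun M _ u xs => ?_⟩
      rw [relativize_inf, relativize_not, BoundedFormula.realize_inf, BoundedFormula.realize_not,
        hχ, Set.forall_mem_insert, iff_false_right hφ]

theorem exists_finite_forth (hd : IsDistFormula.{w} L r d)
    {F : Set (L.BoundedFormula (Fin m) (n + 1))} (hF : F.Finite) :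
    ∃ F' : Set (L.BoundedFormula (Fin m) n), F'.Finite ∧
      ∀ (M M' : Type w) [L.Structure M] [L.Structure M'] (u : Fin m → M) (xs : Fin n → M)
        (u' : Fin m → M') (xs' : Fin n → M'), AgreeOnRelativized d F' u xs u' xs' →
        ∀ x ∈ nbhd L M r u, ∃ y ∈ nbhd L M' r u',
          AgreeOnRelativized d F u (Fin.snoc xs x) u' (Fin.snoc xs' y) := by
  choose χ hχ using exists_realize_relativize_iff_type.{w} d hF
  refine ⟨(fun G => (χ G).ex) '' F.powerset, hF.powerset.image _, ?_⟩
  intro M M' _ _ u xs u' xs' h x hx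
  let G := {φ ∈ F | (relativize d φ).Realize u (Fin.snoc xs x)}
  have hG : ∀ φ ∈ F, ((relativize d φ).Realize u (Fin.snoc xs x) ↔ φ ∈ G) := fun φ hφ =>
    (and_iff_right hφ).symm
  have hex : (relativize d (χ G).ex).Realize u xs :=
    (realize_relativize_ex hd _ u xs).2 ⟨x, hx, (hχ G M u _).2 hG⟩
  obtain ⟨y, hy, hyG⟩ := (realize_relativize_ex hd _ u' xs').1
    ((h _ ⟨G, Set.sep_subset _ _, rfl⟩).1 hex)
  exact ⟨y, hy, fun φ hφ => (hG φ hφ).trans ((hχ G M' u' _).1 hyG φ hφ).symm⟩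

theorem exists_finite_isPartialIso [Finite L.Symbols] (d : L.Formula (Fin 2)) (m n : ℕ) :
    ∃ F : Set (L.BoundedFormula (Fin m) n), F.Finite ∧
      ∀ (M M' : Type w) [L.Structure M] [L.Structure M'] (u : Fin m → M) (xs : Fin n → M)
        (u' : Fin m → M') (xs' : Fin n → M'), AgreeOnRelativized d F u xs u' xs' →
        IsPartialIso L (tuplePairing (Sum.elim u xs) (Sum.elim u' xs')) := by
  have : Finite (Σ l, L.Relations l) :=
    Finite.of_injective (Sum.inr : _ → L.Symbols) Sum.inr_injective
  let equalities : (Fin m ⊕ Fin n) × (Fin m ⊕ Fin n) → L.BoundedFormula (Fin m) n :=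
    fun i => .equal (.var i.1) (.var i.2)
  let relations : (Σ R : (Σ l, L.Relations l), Fin R.1 → Fin m ⊕ Fin n) →
      L.BoundedFormula (Fin m) n :=
    fun i => .rel i.1.2 fun j => .var (i.2 j)
  refine ⟨Set.range equalities ∪ Set.range relations,
    (Set.finite_range _).union (Set.finite_range _), fun M M' _ _ u xs u' xs' h => ⟨?_, ?_⟩⟩
  · rintro _ _ _ _ ⟨i, hi⟩ ⟨j, hj⟩
    obtain ⟨rfl, rfl⟩ := Prod.mk.inj hi
    obtain ⟨rfl, rfl⟩ := Prod.mk.inj hj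
    simpa [equalities, relativize, BoundedFormula.Realize] using h _ (Or.inl ⟨(i, j), rfl⟩)
  · intro l R s t hst
    choose i hi using hst
    obtain rfl : _ = s := funext fun j => (Prod.mk.inj (hi j)).1
    obtain rfl : _ = t := funext fun j => (Prod.mk.inj (hi j)).2
    simpa [relations, relativize, BoundedFormula.Realize] using h _ (Or.inr ⟨⟨⟨l, R⟩, i⟩, rfl⟩)

theorem exists_finite_duplicatorWins [Finite L.Symbols] (hd : IsDistFormula.{w} L r d)
    (k m n : ℕ) :
    ∃ F : Set (L.BoundedFormula (Fin m) n), F.Finite ∧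
      ∀ (M M' : Type w) [L.Structure M] [L.Structure M'] (u : Fin m → M) (xs : Fin n → M)
        (u' : Fin m → M') (xs' : Fin n → M'), AgreeOnRelativized d F u xs u' xs' →
        DuplicatorWins L k (nbhd L M r u) (nbhd L M' r u')
          (tuplePairing (Sum.elim u xs) (Sum.elim u' xs')) := by
  induction k generalizing n with
  | zero => exact exists_finite_isPartialIso d m n
  | succ k ih =>
    obtain ⟨F, hF, hwins⟩ := ih (n + 1)
    obtain ⟨F₁, hF₁, hforth⟩ := exists_finite_forth hd hF
    obtain ⟨F₀, hF₀, hiso⟩ := exists_finite_isPartialIso.{w} d m n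
    refine ⟨F₀ ∪ F₁, hF₀.union hF₁, fun M M' _ _ u xs u' xs' h => ?_⟩
    have h₁ := h.of_subset Set.subset_union_right
    have h₀ := h.of_subset Set.subset_union_left
    refine ⟨hiso _ _ u xs u' xs' h₀, fun x hx => ?_, fun y hy => ?_⟩
    · obtain ⟨y, hy, hxy⟩ := hforth _ _ u xs u' xs' h₁ x hx
      exact ⟨y, hy, tuplePairing_sumElim_snoc u u' xs xs' x y ▸ hwins _ _ _ _ _ _ hxy⟩
    · obtain ⟨x, hx, hxy⟩ := hforth _ _ u' xs' u xs h₁.symm y hy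
      exact ⟨x, hx, tuplePairing_sumElim_snoc u u' xs xs' x y ▸ hwins _ _ _ _ _ _ hxy.symm⟩

theorem exists_duplicatorWinsLocally_of_ltp_eq [Finite L.Symbols] (hd : IsDistFormula.{w} L r d)
    (k m : ℕ) :
    ∃ q : ℕ, ∀ (M M' : Type w) [L.Structure M] [L.Structure M'] (u : Fin m → M) (u' : Fin m → M'),
      ltp d q M u = ltp d q M' u' → DuplicatorWinsLocally L k r (tuplePairing u u') := by
  obtain ⟨F, hF, hwins⟩ := exists_finite_duplicatorWins hd k m 0
  obtain ⟨q, hq⟩ := (hF.image fun φ => qRank (relativize d φ)).bddAbove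
  refine ⟨q, fun M M' _ _ u u' h => ?_⟩
  have hagree : AgreeOnRelativized d F u default u' default :=
    agreeOnRelativized_of_ltp_eq (fun φ hφ => hq ⟨φ, hφ, rfl⟩) h
  rw [DuplicatorWinsLocally, dom_tuplePairing, cod_tuplePairing, ← nbhd_eq_setNbhd_range,
    ← nbhd_eq_setNbhd_range]
  refine (hwins M M' u default u' default hagree).of_subset ?_
  rintro _ ⟨i, rfl⟩
  exact mem_tuplePairing _ _ (Sum.inl i)

end Relativization

theorem exists_arity_le [Finite L.Symbols] : ∃ N, ∀ n, L.Relations n → n ≤ N := by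
  have : Finite (Σ l, L.Relations l) :=
    Finite.of_injective (Sum.inr : _ → L.Symbols) Sum.inr_injective
  obtain ⟨N, hN⟩ := (Set.finite_range (Sigma.fst : (Σ l, L.Relations l) → ℕ)).bddAbove
  exact ⟨N, fun n R => hN ⟨⟨n, R⟩, rfl⟩⟩

end Formulas

/-- Lemma 4.1: for all `m, q` there are `q*, r*` such that tuples with the same
local `(q*, r*)`-type satisfy the same formulas of quantifier rank at most `q`.
Here `d r` is the formula `δ_{≤r}` used in the definition of syntactic `r`-locality. -/
theorem statement_2 {L : FirstOrder.Language} [L.IsRelational] [Finite L.Symbols]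
    (m q : ℕ) (d : ℕ → L.Formula (Fin 2)) (hd : ∀ r, IsDistFormula.{w} L r (d r)) :
    ∃ qs rs : ℕ, ∀ (B : Type w) [L.Structure B] (ψ : L.Formula (Fin m)), qRank ψ ≤ q →
      ∀ u u' : Fin m → B, ltp (d rs) qs B u = ltp (d rs) qs B u' →
        (ψ.Realize u ↔ ψ.Realize u') := by
  obtain ⟨N, hN⟩ := exists_arity_le (L := L)
  obtain ⟨rs, K, hglobal⟩ := exists_duplicatorWins_univ.{w} hN q m
  obtain ⟨qs, hlocal⟩ := exists_duplicatorWinsLocally_of_ltp_eq (hd rs) K m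
  refine ⟨qs, rs, fun B _ ψ hψ u u' h => ?_⟩
  have hcard : Set.encard (tuplePairing u u') ≤ m := by
    simpa using encard_tuplePairing_le u u'
  have hwins : DuplicatorWins L q Set.univ Set.univ (tuplePairing u u') :=
    hglobal B _ hcard (hlocal B B u u' h)
  refine DuplicatorWins.realize_iff hψ (hwins.of_subset ?_)
  rintro _ ⟨i | i, rfl⟩
  · exact mem_tuplePairing u u' i
  · exact i.elim0
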